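/- arXiv:1402.4694 — 2 statements merged into one kernel-verified Lean document; each statement's English description precedes it below -/
import Mathlib

section
/- Let γ ∈ (0,π/2]. Then lim_{τ→+∞} inf_{ξ∈ℝ} ( μ₁(ξ·cos γ + τ·sin γ) + (ξ·sin γ − τ·cos γ)² ) = 1. (By the Persson characterization, the quantity under the limit equals the bottom s_ess(B;α,τ) of the essential spectrum of the Neumann realization on the sector for the field B = (sin γ·cos(α/2), sin γ·sin(α/2), cos γ); hence lim_{τ→+∞} s_ess(B;α,τ) = 1.) -/
open Real MeasureTheory Set Filter

noncomputable section

namespace MagWedge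

/-- The infinite sector `S_α := {(x₁,x₂) : |x₂| ≤ x₁·tan(α/2)}`. -/
def sector (α : ℝ) : Set (ℝ × ℝ) :=
  {x | |x.2| ≤ x.1 * Real.tan (α / 2)}

/-- The infinite wedge `W_α := S_α × ℝ` (coordinates `(x₁, x₂, x₃)`). -/
def wedge (α : ℝ) : Set (ℝ × ℝ × ℝ) :=
  {x | |x.2.1| ≤ x.1 * Real.tan (α / 2)}

/-- The upper half-plane `Hp^up := {x₂ < x₁·tan(α/2)}`. -/
def hpUp (α : ℝ) : Set (ℝ × ℝ) :=
  {x | x.2 < x.1 * Real.tan (α / 2)}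

/-- The lower half-plane `Hp^low := {x₂ > −x₁·tan(α/2)}`. -/
def hpLow (α : ℝ) : Set (ℝ × ℝ) :=
  {x | -(x.1 * Real.tan (α / 2)) < x.2}

/-- The magnetic/electric energy of `u` on a planar domain `Ω`, for magnetic field
`(b₁,b₂,b₃)` (gauge `A̲ = (−x₂ b₃, 0)`) and Fourier parameter `τ`. -/
def energy2D (Ω : Set (ℝ × ℝ)) (b1 b2 b3 τ : ℝ) (u : ℝ × ℝ → ℂ) : ℝ :=
  ∫ x in Ω,
    ‖(-Complex.I) * fderiv ℝ u x (1, 0) + ((x.2 * b3 : ℝ) : ℂ) * u x‖ ^ 2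
      + ‖fderiv ℝ u x (0, 1)‖ ^ 2
      + (x.1 * b2 - x.2 * b1 - τ) ^ 2 * ‖u x‖ ^ 2

/-- The squared `L²`-norm of `u` on a planar domain `Ω`. -/
def norm2D (Ω : Set (ℝ × ℝ)) (u : ℝ × ℝ → ℂ) : ℝ := ∫ x in Ω, ‖u x‖ ^ 2

/-- The bottom of the spectrum of the Neumann realization of
`(−i∇−A̲)² + (x₁b₂−x₂b₁−τ)²` on `Ω`, via the Rayleigh quotient. -/
def specInf2D (Ω : Set (ℝ × ℝ)) (b1 b2 b3 τ : ℝ) : ℝ :=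
  sInf { r : ℝ | ∃ u : ℝ × ℝ → ℂ, ContDiff ℝ (⊤ : ℕ∞) u ∧ HasCompactSupport u ∧
    0 < norm2D Ω u ∧ r = energy2D Ω b1 b2 b3 τ u / norm2D Ω u }

/-- The band function `s(B;α,τ)` on the sector `S_α`. -/
def bandFn (α b1 b2 b3 τ : ℝ) : ℝ := specInf2D (sector α) b1 b2 b3 τ

/-- `Σ(B;α,τ,R)` : the Rayleigh quotient infimum over functions supported outside the
(closed Euclidean) ball of radius `R` centered at the origin. -/
def SigmaR (α b1 b2 b3 τ R : ℝ) : ℝ :=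
  sInf { r : ℝ | ∃ u : ℝ × ℝ → ℂ, ContDiff ℝ (⊤ : ℕ∞) u ∧ HasCompactSupport u ∧
    (tsupport u ⊆ {x : ℝ × ℝ | R ^ 2 < x.1 ^ 2 + x.2 ^ 2}) ∧
    0 < norm2D (sector α) u ∧
    r = energy2D (sector α) b1 b2 b3 τ u / norm2D (sector α) u }

/-- The bottom of the essential spectrum via Persson's characterization:
`s_ess(B;α,τ) = sup_{R>0} Σ(B;α,τ,R)`. -/
def sEss (α b1 b2 b3 τ : ℝ) : ℝ :=
  sSup { r : ℝ | ∃ R > (0 : ℝ), r = SigmaR α b1 b2 b3 τ R }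

/-- The 3D magnetic energy on a domain `Ω ⊆ ℝ³` for the constant field `(b₁,b₂,b₃)`,
in the gauge `A = (−x₂b₃, 0, x₂b₁ − x₁b₂)`. -/
def energy3D (Ω : Set (ℝ × ℝ × ℝ)) (b1 b2 b3 : ℝ) (u : ℝ × ℝ × ℝ → ℂ) : ℝ :=
  ∫ x in Ω,
    ‖(-Complex.I) * fderiv ℝ u x (1, 0, 0) + ((x.2.1 * b3 : ℝ) : ℂ) * u x‖ ^ 2
      + ‖fderiv ℝ u x (0, 1, 0)‖ ^ 2
      + ‖(-Complex.I) * fderiv ℝ u x (0, 0, 1) - ((x.2.1 * b1 : ℝ) : ℂ) * u x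
          + ((x.1 * b2 : ℝ) : ℂ) * u x‖ ^ 2

/-- The squared `L²`-norm of `u` on a domain `Ω ⊆ ℝ³`. -/
def norm3D (Ω : Set (ℝ × ℝ × ℝ)) (u : ℝ × ℝ × ℝ → ℂ) : ℝ := ∫ x in Ω, ‖u x‖ ^ 2

/-- `λ(B;W_α)` : the bottom of the spectrum of the Neumann magnetic Laplacian on the
wedge `W_α` with constant magnetic field `B = (b₁,b₂,b₃)`. -/
def lambdaWedge (α b1 b2 b3 : ℝ) : ℝ :=
  sInf { r : ℝ | ∃ u : ℝ × ℝ × ℝ → ℂ, ContDiff ℝ (⊤ : ℕ∞) u ∧ HasCompactSupport u ∧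
    0 < norm3D (wedge α) u ∧ r = energy3D (wedge α) b1 b2 b3 u / norm3D (wedge α) u }

/-- The de Gennes function `μ₁(ξ)`: bottom of the spectrum of the Neumann realization of
`−d²/dt² + (t−ξ)²` on the half-line. -/
def deGennes (ξ : ℝ) : ℝ :=
  sInf { r : ℝ | ∃ u : ℝ → ℂ, ContDiff ℝ (⊤ : ℕ∞) u ∧ HasCompactSupport u ∧
    (0 < ∫ t in Ioi (0 : ℝ), ‖u t‖ ^ 2) ∧
    r = (∫ t in Ioi (0 : ℝ), ‖deriv u t‖ ^ 2 + (t - ξ) ^ 2 * ‖u t‖ ^ 2) /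
        (∫ t in Ioi (0 : ℝ), ‖u t‖ ^ 2) }

/-- `Θ₀ := inf_ξ μ₁(ξ)`. -/
def Theta0 : ℝ := ⨅ ξ : ℝ, deGennes ξ

/-- The half-space `{(s,t,z) : t > 0}` in ℝ³. -/
def halfSpace3 : Set (ℝ × ℝ × ℝ) := {x | 0 < x.2.1}

/-- `σ(θ)` : the bottom of the spectrum of the Neumann magnetic Laplacian on the half-space
with a unit magnetic field making angle `θ` with the boundary. -/
def sigmaHS (θ : ℝ) : ℝ :=
  sInf { r : ℝ | ∃ u : ℝ × ℝ × ℝ → ℂ, ContDiff ℝ (⊤ : ℕ∞) u ∧ HasCompactSupport u ∧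
    (0 < ∫ x in halfSpace3, ‖u x‖ ^ 2) ∧
    r = (∫ x in halfSpace3,
          ‖fderiv ℝ u x (1, 0, 0)‖ ^ 2 + ‖fderiv ℝ u x (0, 1, 0)‖ ^ 2
            + ‖(-Complex.I) * fderiv ℝ u x (0, 0, 1)
                - ((x.2.1 * Real.cos θ : ℝ) : ℂ) * u x
                + ((x.1 * Real.sin θ : ℝ) : ℂ) * u x‖ ^ 2) /
        (∫ x in halfSpace3, ‖u x‖ ^ 2) }

/-- `μ(α)` : the bottom of the spectrum of the magnetic Neumann Laplacian on the sector
`S_α` with unit constant (scalar) magnetic field. -/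
def muSector (α : ℝ) : ℝ :=
  sInf { r : ℝ | ∃ u : ℝ × ℝ → ℂ, ContDiff ℝ (⊤ : ℕ∞) u ∧ HasCompactSupport u ∧
    0 < norm2D (sector α) u ∧
    r = (∫ x in sector α,
          ‖(-Complex.I) * fderiv ℝ u x (1, 0) + (x.2 : ℂ) * u x‖ ^ 2
            + ‖fderiv ℝ u x (0, 1)‖ ^ 2) / norm2D (sector α) u }

end MagWedge

/-!
In the rotated variable `y = ξ sin γ - τ cos γ` the infimum becomes
`⨅ y, μ₁((τ + y cos γ) / sin γ) + y²`. Since `μ₁ ≥ 0`, only bounded `y` compete, and there the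
argument of `μ₁` tends to `+∞` with `τ`; so it is enough that `μ₁(ξ) → 1` as `ξ → +∞`.

Completing the square `‖u' - φ u‖² ≥ 0` with a subsolution `φ` of the Riccati equation bounds
`μ₁(ξ)` below by `1` up to an exponentially small error. For the upper bound, the trial function is
the ground state of the oscillator on the whole line: for `ξ ≥ 0` it increases at `0`, so the
boundary term in its energy on the half-line has the favourable sign.
-/

namespace MagWedge

open scoped Topology

section InfimumOverShifts

lemma tendsto_iInf_comp_affine_add_sq {f : ℝ → ℝ} {L a : ℝ} (hbdd : BddBelow (range f))
    (hf : Tendsto f atTop (𝓝 L)) (ha : 0 < a) (b : ℝ) :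
    Tendsto (fun τ => ⨅ y, f (a * τ + b * y) + y ^ 2) atTop (𝓝 L) := by
  obtain ⟨m, hm⟩ := hbdd
  replace hm : ∀ x, m ≤ f x := fun x => hm (mem_range_self x)
  have haτ : Tendsto (fun τ => a * τ) atTop atTop := tendsto_id.const_mul_atTop ha
  refine tendsto_order.2 ⟨fun l hl => ?_, fun l hl => ?_⟩
  · obtain ⟨l', hll', hl'⟩ := exists_between hl
    obtain ⟨M, hM⟩ := eventually_atTop.1 (hf.eventually_const_le hl')
    filter_upwards [haτ.eventually_ge_atTop (M + |b| * √(L - m))] with τ hτ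
    refine hll'.trans_le (le_ciInf fun y => ?_)
    rcases le_or_gt |y| √(L - m) with hy | hy
    · have hby : |b * y| ≤ |b| * √(L - m) :=
        (abs_mul b y).trans_le (mul_le_mul_of_nonneg_left hy (abs_nonneg b))
      have := hM (a * τ + b * y) (by linarith [neg_abs_le (b * y)])
      linarith [sq_nonneg y]
    · have hy2 : L - m < y ^ 2 := sq_abs y ▸ Real.lt_sq_of_sqrt_lt hy
      linarith [hm (a * τ + b * y)]
  · filter_upwards [(hf.comp haτ).eventually_lt_const hl] with τ hτ
    have hbelow : BddBelow (range fun y => f (a * τ + b * y) + y ^ 2) := by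
      refine ⟨m, forall_mem_range.2 fun y => ?_⟩
      linarith [hm (a * τ + b * y), sq_nonneg y]
    exact (ciInf_le hbelow 0).trans_lt (by simpa using hτ)

lemma iInf_comp_rotation_add_sq (f : ℝ → ℝ) {γ : ℝ} (hγ : sin γ ≠ 0) (τ : ℝ) :
    ⨅ ξ : ℝ, f (ξ * cos γ + τ * sin γ) + (ξ * sin γ - τ * cos γ) ^ 2 =
      ⨅ y : ℝ, f ((sin γ)⁻¹ * τ + cos γ / sin γ * y) + y ^ 2 := by
  refine Function.Surjective.iInf_congr (fun ξ => ξ * sin γ - τ * cos γ) (fun y => ?_) fun ξ => ?_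
  · exact ⟨(y + τ * cos γ) / sin γ, by field_simp; ring⟩
  · congr 2
    field_simp
    linear_combination -τ * sin_sq_add_cos_sq γ

end InfimumOverShifts

section Integrals

lemma hasCompactSupport_fun_pow {X R : Type*} [TopologicalSpace X] [MonoidWithZero R]
    {f : X → R} (hf : HasCompactSupport f) {n : ℕ} (hn : n ≠ 0) :
    HasCompactSupport fun x => f x ^ n :=
  hf.comp_left (g := fun r : R => r ^ n) (zero_pow hn)

lemma integrable_norm_sq {E : Type*} [NormedAddCommGroup E] {u : ℝ → E} (hu : Continuous u)
    (huc : HasCompactSupport u) : Integrable fun t => ‖u t‖ ^ 2 :=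
  (hu.norm.pow 2).integrable_of_hasCompactSupport (hasCompactSupport_fun_pow huc.norm two_ne_zero)

lemma setIntegral_pos_of_isOpen {X : Type*} [TopologicalSpace X] [MeasurableSpace X]
    [OpensMeasurableSpace X] {μ : Measure X} [μ.IsOpenPosMeasure] {s : Set X} {f : X → ℝ}
    (hs : IsOpen s) (hf : Continuous f) (hfi : IntegrableOn f s μ) (hnonneg : ∀ x, 0 ≤ f x)
    {x : X} (hxs : x ∈ s) (hx : f x ≠ 0) : 0 < ∫ x in s, f x ∂μ := by
  rw [setIntegral_pos_iff_support_of_nonneg_ae (.of_forall hnonneg) hfi]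
  exact (hf.isOpen_support.inter hs).measure_pos μ ⟨x, hx, hxs⟩

lemma continuous_integral_comp_mul_mul {μ : Measure ℝ} {h w : ℝ → ℝ} {C : ℝ}
    (hh : Continuous h) (hC : ∀ t, ‖h t‖ ≤ C) (hw : Integrable w μ) :
    Continuous fun ε : ℝ => ∫ t, h (ε * t) * w t ∂μ := by
  refine continuous_of_dominated (bound := fun t => C * ‖w t‖) (fun ε => ?_)
    (fun ε => .of_forall fun t => ?_) (hw.norm.const_mul C) (.of_forall fun t => by fun_prop)
  · exact (hh.comp (continuous_const_mul ε)).aestronglyMeasurable.mul hw.aestronglyMeasurable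
  · exact (norm_mul _ _).trans_le (mul_le_mul_of_nonneg_right (hC _) (norm_nonneg _))

end Integrals

section Energy

variable {E : Type*} [NormedAddCommGroup E] [InnerProductSpace ℝ E]
  {V : ℝ → ℝ} {u : ℝ → E}

/-- The quadratic form of the Neumann realization of `−d²/dt² + V` on the half-line `(0, ∞)`. -/
def neumannEnergy (V : ℝ → ℝ) (u : ℝ → E) : ℝ :=
  ∫ t in Ioi (0 : ℝ), ‖deriv u t‖ ^ 2 + V t * ‖u t‖ ^ 2

lemma neumannEnergy_nonneg (hV : ∀ t > 0, 0 ≤ V t) (u : ℝ → E) : 0 ≤ neumannEnergy V u :=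
  setIntegral_nonneg measurableSet_Ioi fun t ht =>
    add_nonneg (by positivity) (mul_nonneg (hV t ht) (by positivity))

lemma integrable_neumannEnergy_density (hV : Continuous V) (hu : ContDiff ℝ 1 u)
    (huc : HasCompactSupport u) : Integrable fun t => ‖deriv u t‖ ^ 2 + V t * ‖u t‖ ^ 2 := by
  refine (integrable_norm_sq hu.continuous_deriv_one huc.deriv).add ?_
  exact (hV.mul (hu.continuous.norm.pow 2)).integrable_of_hasCompactSupport
    (hasCompactSupport_fun_pow huc.norm two_ne_zero).mul_left

lemma two_mul_mul_inner_le (c : ℝ) (x y : E) :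
    2 * (c * inner ℝ x y) ≤ c ^ 2 * ‖x‖ ^ 2 + ‖y‖ ^ 2 := by
  have h := norm_sub_sq_real (c • x) y
  rw [real_inner_smul_left, norm_smul, mul_pow, norm_eq_abs, sq_abs] at h
  linarith [sq_nonneg ‖c • x - y‖]

-- For a positive solution `g` of `−g″ + V g = lam g`, the function `φ = g′ / g` satisfies the
-- Riccati equation `φ′ + φ² = V − lam`; a subsolution suffices since `0 ≤ ‖u′ − φ u‖²`.
theorem mul_integral_norm_sq_le_neumannEnergy {φ : ℝ → ℝ} {lam : ℝ} (hV : Continuous V)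
    (hφ : ContDiff ℝ 1 φ) (hφ0 : φ 0 ≤ 0) (hφV : ∀ t > 0, deriv φ t + φ t ^ 2 ≤ V t - lam)
    (hu : ContDiff ℝ 1 u) (huc : HasCompactSupport u) :
    lam * ∫ t in Ioi (0 : ℝ), ‖u t‖ ^ 2 ≤ neumannEnergy V u := by
  let F : ℝ → ℝ := fun t => φ t * ‖u t‖ ^ 2
  have hFdiff : ContDiff ℝ 1 F := hφ.mul (hu.norm_sq ℝ)
  have hFsupp : HasCompactSupport F := (hasCompactSupport_fun_pow huc.norm two_ne_zero).mul_left
  have hFint : Integrable (deriv F) :=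
    hFdiff.continuous_deriv_one.integrable_of_hasCompactSupport hFsupp.deriv
  have hFderiv (t : ℝ) : deriv F t =
      deriv φ t * ‖u t‖ ^ 2 + φ t * (2 * inner ℝ (u t) (deriv u t)) :=
    ((hφ.differentiable one_ne_zero t).hasDerivAt.mul
      (hu.differentiable one_ne_zero t).hasDerivAt.norm_sq).deriv
  have hboundary : 0 ≤ ∫ t in Ioi (0 : ℝ), deriv F t := by
    rw [hFsupp.integral_Ioi_deriv_eq hFdiff, neg_nonneg]
    exact mul_nonpos_of_nonpos_of_nonneg hφ0 (by positivity)
  have hpointwise : ∀ t ∈ Ioi (0 : ℝ),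
      lam * ‖u t‖ ^ 2 + deriv F t ≤ ‖deriv u t‖ ^ 2 + V t * ‖u t‖ ^ 2 := by
    intro t ht
    rw [hFderiv]
    linarith [two_mul_mul_inner_le (φ t) (u t) (deriv u t),
      mul_le_mul_of_nonneg_right (hφV t ht) (sq_nonneg ‖u t‖)]
  have hnorm := (integrable_norm_sq hu.continuous huc).const_mul lam
  calc lam * ∫ t in Ioi (0 : ℝ), ‖u t‖ ^ 2
      ≤ (∫ t in Ioi (0 : ℝ), lam * ‖u t‖ ^ 2) + ∫ t in Ioi (0 : ℝ), deriv F t := by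
        rw [integral_const_mul]
        linarith
    _ = ∫ t in Ioi (0 : ℝ), lam * ‖u t‖ ^ 2 + deriv F t :=
        (integral_add hnorm.integrableOn hFint.integrableOn).symm
    _ ≤ neumannEnergy V u :=
        setIntegral_mono_on (hnorm.add hFint).integrableOn
          (integrable_neumannEnergy_density hV hu huc).integrableOn measurableSet_Ioi hpointwise

-- IMS localization: the cross terms form an exact derivative, which integrates to a boundary term.
theorem neumannEnergy_smul_eq {χ : ℝ → ℝ} {g : ℝ → E} (hV : Continuous V)
    (hχ : ContDiff ℝ 1 χ) (hχc : HasCompactSupport χ) (hg : ContDiff ℝ 2 g) :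
    neumannEnergy V (fun t => χ t • g t) =
      (∫ t in Ioi (0 : ℝ), deriv χ t ^ 2 * ‖g t‖ ^ 2
        + χ t ^ 2 * inner ℝ (g t) (V t • g t - deriv (deriv g) t))
      - χ 0 ^ 2 * inner ℝ (g 0) (deriv g 0) := by
  have hg1 : ContDiff ℝ 1 g := hg.of_le one_le_two
  have hg' : ContDiff ℝ 1 (deriv g) := hg.deriv'
  have hsmul : ContDiff ℝ 1 fun t => χ t • g t := hχ.smul hg1
  let F : ℝ → ℝ := fun t => χ t ^ 2 * inner ℝ (g t) (deriv g t)
  have hFdiff : ContDiff ℝ 1 F := (hχ.pow 2).mul (hg1.inner ℝ hg')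
  have hFsupp : HasCompactSupport F := (hasCompactSupport_fun_pow hχc two_ne_zero).mul_right
  have hFint : Integrable (deriv F) :=
    hFdiff.continuous_deriv_one.integrable_of_hasCompactSupport hFsupp.deriv
  have hpointwise (t : ℝ) : deriv χ t ^ 2 * ‖g t‖ ^ 2
      + χ t ^ 2 * inner ℝ (g t) (V t • g t - deriv (deriv g) t)
      = ‖deriv (fun t => χ t • g t) t‖ ^ 2 + V t * ‖χ t • g t‖ ^ 2 - deriv F t := by
    have hdχ := (hχ.differentiable one_ne_zero t).hasDerivAt
    have hdg := (hg1.differentiable one_ne_zero t).hasDerivAt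
    have hdg' := (hg'.differentiable one_ne_zero t).hasDerivAt
    rw [(hdχ.fun_smul hdg).deriv, ((hdχ.fun_pow 2).fun_mul (hdg.inner ℝ hdg')).deriv,
      norm_add_sq_real, inner_sub_right]
    simp only [inner_smul_left, inner_smul_right, norm_smul, mul_pow, norm_eq_abs, sq_abs,
      real_inner_self_eq_norm_sq, real_inner_comm, conj_trivial]
    ring
  have henergy := integrable_neumannEnergy_density hV hsmul hχc.smul_right
  simp_rw [hpointwise]
  rw [integral_sub henergy.integrableOn hFint.integrableOn, hFsupp.integral_Ioi_deriv_eq hFdiff,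
    neumannEnergy]
  ring

end Energy

section Bottom

variable {V : ℝ → ℝ} {lam : ℝ}

/-- The bottom of the spectrum of the Neumann realization of `−d²/dt² + V` on `(0, ∞)`, so that
`deGennes ξ` is the case `V t = (t - ξ) ^ 2`. -/
def neumannBottom (V : ℝ → ℝ) : ℝ :=
  sInf { r : ℝ | ∃ u : ℝ → ℂ, ContDiff ℝ (⊤ : ℕ∞) u ∧ HasCompactSupport u ∧
    (0 < ∫ t in Ioi (0 : ℝ), ‖u t‖ ^ 2) ∧
    r = neumannEnergy V u / ∫ t in Ioi (0 : ℝ), ‖u t‖ ^ 2 }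

lemma neumannBottom_nonneg (hV : ∀ t > 0, 0 ≤ V t) : 0 ≤ neumannBottom V := by
  refine Real.sInf_nonneg ?_
  rintro _ ⟨u, -, -, hpos, rfl⟩
  exact div_nonneg (neumannEnergy_nonneg hV u) hpos.le

lemma neumannBottom_mul_le_neumannEnergy (hV : ∀ t > 0, 0 ≤ V t) {u : ℝ → ℂ}
    (hu : ContDiff ℝ (⊤ : ℕ∞) u) (huc : HasCompactSupport u) :
    neumannBottom V * ∫ t in Ioi (0 : ℝ), ‖u t‖ ^ 2 ≤ neumannEnergy V u := by
  have hnonneg : 0 ≤ ∫ t in Ioi (0 : ℝ), ‖u t‖ ^ 2 := integral_nonneg fun t => by positivity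
  rcases hnonneg.eq_or_lt with hzero | hpos
  · rw [← hzero, mul_zero]
    exact neumannEnergy_nonneg hV u
  · rw [← le_div_iff₀ hpos]
    refine csInf_le ⟨0, ?_⟩ ⟨u, hu, huc, hpos, rfl⟩
    rintro _ ⟨v, -, -, hv, rfl⟩
    exact div_nonneg (neumannEnergy_nonneg hV v) hv.le

lemma exists_contDiff_hasCompactSupport_integral_norm_sq_pos :
    ∃ u : ℝ → ℂ, ContDiff ℝ (⊤ : ℕ∞) u ∧ HasCompactSupport u ∧
      0 < ∫ t in Ioi (0 : ℝ), ‖u t‖ ^ 2 := by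
  let b : ContDiffBump (1 : ℝ) := default
  have hb : ContDiff ℝ (⊤ : ℕ∞) fun t => (b t : ℂ) := Complex.ofRealCLM.contDiff.comp b.contDiff
  have hbc : HasCompactSupport fun t => (b t : ℂ) :=
    b.hasCompactSupport.comp_left Complex.ofReal_zero
  have hb1 : b 1 ≠ 0 := (b.pos_of_mem_ball (Metric.mem_ball_self b.rOut_pos)).ne'
  refine ⟨_, hb, hbc, setIntegral_pos_of_isOpen isOpen_Ioi (hb.continuous.norm.pow 2)
    (integrable_norm_sq hb.continuous hbc).integrableOn (fun t => by positivity)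
    (mem_Ioi.2 one_pos) ?_⟩
  simpa using hb1

theorem le_neumannBottom_of_riccati {φ : ℝ → ℝ} (hV : Continuous V)
    (hφ : ContDiff ℝ 1 φ) (hφ0 : φ 0 ≤ 0) (hφV : ∀ t > 0, deriv φ t + φ t ^ 2 ≤ V t - lam) :
    lam ≤ neumannBottom V := by
  obtain ⟨v, hv, hvc, hvpos⟩ := exists_contDiff_hasCompactSupport_integral_norm_sq_pos
  refine le_csInf ⟨_, v, hv, hvc, hvpos, rfl⟩ ?_
  rintro _ ⟨u, hu, huc, hpos, rfl⟩
  rw [le_div_iff₀ hpos]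
  exact mul_integral_norm_sq_le_neumannEnergy hV hφ hφ0 hφV (hu.of_le (by simp)) huc

lemma neumannBottom_mul_integral_cutoff_le {χ : ℝ → ℝ} {g : ℝ → ℂ} (hV : Continuous V)
    (hV0 : ∀ t > 0, 0 ≤ V t) (hχ : ContDiff ℝ (⊤ : ℕ∞) χ) (hχc : HasCompactSupport χ)
    (hg : ContDiff ℝ (⊤ : ℕ∞) g) (hg0 : 0 ≤ inner ℝ (g 0) (deriv g 0))
    (hgV : ∀ t > 0, inner ℝ (g t) (V t • g t - deriv (deriv g) t) ≤ lam * ‖g t‖ ^ 2) :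
    neumannBottom V * ∫ t in Ioi (0 : ℝ), χ t ^ 2 * ‖g t‖ ^ 2 ≤
      (∫ t in Ioi (0 : ℝ), deriv χ t ^ 2 * ‖g t‖ ^ 2)
        + lam * ∫ t in Ioi (0 : ℝ), χ t ^ 2 * ‖g t‖ ^ 2 := by
  have hχ1 : ContDiff ℝ 1 χ := hχ.of_le (by simp)
  have hg2 : ContDiff ℝ 2 g := contDiff_infty.1 hg 2
  have hnorm : Continuous fun t => ‖g t‖ ^ 2 := hg.continuous.norm.pow 2
  have hint : Integrable fun t => χ t ^ 2 * ‖g t‖ ^ 2 :=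
    ((hχ.continuous.pow 2).mul hnorm).integrable_of_hasCompactSupport
      (hasCompactSupport_fun_pow hχc two_ne_zero).mul_right
  have hint' : Integrable fun t => deriv χ t ^ 2 * ‖g t‖ ^ 2 :=
    ((hχ1.continuous_deriv_one.pow 2).mul hnorm).integrable_of_hasCompactSupport
      (hasCompactSupport_fun_pow hχc.deriv two_ne_zero).mul_right
  have hform : Integrable fun t => χ t ^ 2 * inner ℝ (g t) (V t • g t - deriv (deriv g) t) := by
    have hg'' : Continuous (deriv (deriv g)) := hg2.deriv'.continuous_deriv_one
    have hinner := hg.continuous.inner (𝕜 := ℝ) ((hV.smul hg.continuous).sub hg'')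
    exact ((hχ.continuous.pow 2).mul hinner).integrable_of_hasCompactSupport
      (hasCompactSupport_fun_pow hχc two_ne_zero).mul_right
  calc neumannBottom V * ∫ t in Ioi (0 : ℝ), χ t ^ 2 * ‖g t‖ ^ 2
      = neumannBottom V * ∫ t in Ioi (0 : ℝ), ‖χ t • g t‖ ^ 2 := by
        simp only [norm_smul, mul_pow, norm_eq_abs, sq_abs]
    _ ≤ neumannEnergy V fun t => χ t • g t :=
        neumannBottom_mul_le_neumannEnergy hV0 (hχ.smul hg) hχc.smul_right
    _ ≤ ∫ t in Ioi (0 : ℝ), deriv χ t ^ 2 * ‖g t‖ ^ 2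
          + χ t ^ 2 * inner ℝ (g t) (V t • g t - deriv (deriv g) t) := by
        rw [neumannEnergy_smul_eq hV hχ1 hχc hg2]
        exact sub_le_self _ (mul_nonneg (sq_nonneg _) hg0)
    _ ≤ ∫ t in Ioi (0 : ℝ), deriv χ t ^ 2 * ‖g t‖ ^ 2 + lam * (χ t ^ 2 * ‖g t‖ ^ 2) := by
        refine setIntegral_mono_on (hint'.add hform).integrableOn
          (hint'.add (hint.const_mul lam)).integrableOn measurableSet_Ioi fun t ht => ?_
        linarith [mul_le_mul_of_nonneg_left (hgV t ht) (sq_nonneg (χ t))]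
    _ = _ := by
        rw [integral_add hint'.integrableOn (hint.const_mul lam).integrableOn, integral_const_mul]

lemma neumannBottom_mul_integral_dilate_le {χ : ℝ → ℝ} {g : ℝ → ℂ} (hV : Continuous V)
    (hV0 : ∀ t > 0, 0 ≤ V t) (hχ : ContDiff ℝ (⊤ : ℕ∞) χ) (hχc : HasCompactSupport χ)
    (hg : ContDiff ℝ (⊤ : ℕ∞) g) (hg0 : 0 ≤ inner ℝ (g 0) (deriv g 0))
    (hgV : ∀ t > 0, inner ℝ (g t) (V t • g t - deriv (deriv g) t) ≤ lam * ‖g t‖ ^ 2)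
    {ε : ℝ} (hε : ε ≠ 0) :
    neumannBottom V * ∫ t in Ioi (0 : ℝ), χ (ε * t) ^ 2 * ‖g t‖ ^ 2 ≤
      ε ^ 2 * (∫ t in Ioi (0 : ℝ), deriv χ (ε * t) ^ 2 * ‖g t‖ ^ 2)
        + lam * ∫ t in Ioi (0 : ℝ), χ (ε * t) ^ 2 * ‖g t‖ ^ 2 := by
  have hdilate : ContDiff ℝ (⊤ : ℕ∞) fun t => χ (ε * t) :=
    hχ.comp (contDiff_const.mul contDiff_id)
  have hdilatec : HasCompactSupport fun t => χ (ε * t) :=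
    hχc.comp_homeomorph (Homeomorph.mulLeft₀ ε hε)
  have hcutoff := neumannBottom_mul_integral_cutoff_le hV hV0 hdilate hdilatec hg hg0 hgV
  have hderiv (t : ℝ) : deriv (fun t => χ (ε * t)) t = ε * deriv χ (ε * t) :=
    deriv_comp_mul_left ε χ t
  simpa only [hderiv, mul_pow, mul_assoc, integral_const_mul] using hcutoff

-- Truncating `g` to `b (ε t) g t` costs an error `O(ε ^ 2)` in the energy.
theorem neumannBottom_le_of_subsolution {g : ℝ → ℂ} (hV : Continuous V)
    (hV0 : ∀ t > 0, 0 ≤ V t) (hg : ContDiff ℝ (⊤ : ℕ∞) g)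
    (hgint : IntegrableOn (fun t => ‖g t‖ ^ 2) (Ioi 0))
    (hgpos : 0 < ∫ t in Ioi (0 : ℝ), ‖g t‖ ^ 2) (hg0 : 0 ≤ inner ℝ (g 0) (deriv g 0))
    (hgV : ∀ t > 0, inner ℝ (g t) (V t • g t - deriv (deriv g) t) ≤ lam * ‖g t‖ ^ 2) :
    neumannBottom V ≤ lam := by
  let b : ContDiffBump (0 : ℝ) := default
  have hb : ContDiff ℝ (⊤ : ℕ∞) b := b.contDiff
  have hb0 : b 0 = 1 := b.one_of_mem_closedBall (Metric.mem_closedBall_self b.rIn_pos.le)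
  have hb' : Continuous (deriv b) := hb.continuous_deriv (by simp)
  obtain ⟨C, hC⟩ := (hb.continuous.pow 2).bounded_above_of_compact_support
    (hasCompactSupport_fun_pow b.hasCompactSupport two_ne_zero)
  obtain ⟨C', hC'⟩ := (hb'.pow 2).bounded_above_of_compact_support
    (hasCompactSupport_fun_pow b.hasCompactSupport.deriv two_ne_zero)
  have hnorm : Tendsto (fun ε : ℝ => ∫ t in Ioi (0 : ℝ), b (ε * t) ^ 2 * ‖g t‖ ^ 2) (𝓝 0)
      (𝓝 (∫ t in Ioi (0 : ℝ), ‖g t‖ ^ 2)) :=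
    (continuous_integral_comp_mul_mul (hb.continuous.pow 2) hC hgint).tendsto' _ _ <| by
      simp only [Pi.pow_apply, zero_mul, hb0, one_pow, one_mul]
  have herror : Tendsto (fun ε : ℝ => ε ^ 2 * ∫ t in Ioi (0 : ℝ), deriv b (ε * t) ^ 2 * ‖g t‖ ^ 2)
      (𝓝 0) (𝓝 0) :=
    ((continuous_pow 2).fun_mul (continuous_integral_comp_mul_mul (hb'.pow 2) hC' hgint)).tendsto'
      _ _ <| by rw [zero_pow two_ne_zero, zero_mul]
  have hlim := le_of_tendsto_of_tendsto (b := 𝓝[≠] 0)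
    ((hnorm.const_mul (neumannBottom V)).mono_left nhdsWithin_le_nhds)
    ((herror.add (hnorm.const_mul lam)).mono_left nhdsWithin_le_nhds)
    (eventually_mem_nhdsWithin.mono fun ε hε =>
      neumannBottom_mul_integral_dilate_le hV hV0 hb b.hasCompactSupport hg hg0 hgV hε)
  rw [zero_add] at hlim
  exact le_of_mul_le_mul_right hlim hgpos

end Bottom

section DeGennes

lemma deGennes_eq_neumannBottom (ξ : ℝ) :
    deGennes ξ = neumannBottom fun t => (t - ξ) ^ 2 :=
  rfl

lemma deGennes_nonneg (ξ : ℝ) : 0 ≤ deGennes ξ :=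
  deGennes_eq_neumannBottom ξ ▸ neumannBottom_nonneg fun _ _ => sq_nonneg _

-- The whole-line ground state has logarithmic derivative `ξ - t`; subtracting `ξ exp (-t)` makes it
-- vanish at `0`, and where this term is not small, its cross term with `ξ - t` has the good sign.
theorem one_sub_le_deGennes {ξ : ℝ} (hξ : 0 ≤ ξ) :
    1 - 2 * ξ * exp ((1 - ξ) / 2) ≤ deGennes ξ := by
  rw [deGennes_eq_neumannBottom]
  refine le_neumannBottom_of_riccati (φ := fun t => ξ - t - ξ * exp (-t)) (by fun_prop)
    (by fun_prop) (by simp) fun t ht => ?_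
  have hderiv : deriv (fun t => ξ - t - ξ * exp (-t)) t = -1 + ξ * exp (-t) := by
    have := ((hasDerivAt_id t).const_sub ξ).sub (((hasDerivAt_id t).neg.exp).const_mul ξ)
    exact (this.congr_deriv (by simp)).deriv
  have hexp : exp (-t) ≤ 1 := exp_le_one_iff.2 (by linarith)
  have hsplit : exp (-t) * exp ((1 - ξ) / 2 + t) = exp ((1 - ξ) / 2) := by
    rw [← exp_add]
    ring_nf
  have hfactor : 1 - 2 * (ξ - t) + ξ * exp (-t) ≤ 2 * exp ((1 - ξ) / 2 + t) := by
    linarith [add_one_le_exp ((1 - ξ) / 2 + t), mul_le_mul_of_nonneg_left hexp hξ]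
  calc deriv (fun t => ξ - t - ξ * exp (-t)) t + (ξ - t - ξ * exp (-t)) ^ 2
      = (t - ξ) ^ 2 - 1 + ξ * exp (-t) * (1 - 2 * (ξ - t) + ξ * exp (-t)) := by
        rw [hderiv]
        ring
    _ ≤ (t - ξ) ^ 2 - 1 + ξ * exp (-t) * (2 * exp ((1 - ξ) / 2 + t)) := by
        gcongr
    _ = (t - ξ) ^ 2 - (1 - 2 * ξ * exp ((1 - ξ) / 2)) := by
        rw [← hsplit]
        ring

/-- The ground state of the harmonic oscillator `−d²/dt² + (t − ξ)²` on the whole line; it is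
complex-valued because the trial functions of `deGennes` are. -/
def oscillatorGroundState (ξ t : ℝ) : ℂ :=
  (exp (-(t - ξ) ^ 2 / 2) : ℝ)

lemma contDiff_oscillatorGroundState (ξ : ℝ) :
    ContDiff ℝ (⊤ : ℕ∞) (oscillatorGroundState ξ) :=
  Complex.ofRealCLM.contDiff.comp
    (by fun_prop : ContDiff ℝ (⊤ : ℕ∞) fun t : ℝ => exp (-(t - ξ) ^ 2 / 2))

lemma hasDerivAt_oscillatorGroundState (ξ t : ℝ) :
    HasDerivAt (oscillatorGroundState ξ) ((ξ - t) • oscillatorGroundState ξ t) t := by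
  have hreal := ((((hasDerivAt_id t).sub_const ξ).pow 2).neg.div_const 2).exp
  refine hreal.ofReal_comp.congr_deriv ?_
  rw [oscillatorGroundState, Complex.real_smul, ← Complex.ofReal_mul]
  congr 1
  simp only [id_eq, Pi.pow_apply, Pi.neg_apply]
  ring

lemma deriv_oscillatorGroundState (ξ : ℝ) :
    deriv (oscillatorGroundState ξ) = fun t => (ξ - t) • oscillatorGroundState ξ t :=
  funext fun t => (hasDerivAt_oscillatorGroundState ξ t).deriv

lemma deriv_deriv_oscillatorGroundState (ξ t : ℝ) :
    deriv (deriv (oscillatorGroundState ξ)) t = ((t - ξ) ^ 2 - 1) • oscillatorGroundState ξ t := by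
  have h := ((hasDerivAt_id t).const_sub ξ).fun_smul (hasDerivAt_oscillatorGroundState ξ t)
  rw [deriv_oscillatorGroundState]
  refine (h.congr_deriv ?_).deriv
  simp only [id_eq]
  module

lemma norm_oscillatorGroundState_sq (ξ t : ℝ) :
    ‖oscillatorGroundState ξ t‖ ^ 2 = exp (-1 * (t - ξ) ^ 2) := by
  rw [oscillatorGroundState, Complex.norm_real, norm_of_nonneg (exp_pos _).le, ← exp_nat_mul]
  congr 1
  push_cast
  ring

theorem deGennes_le_one {ξ : ℝ} (hξ : 0 ≤ ξ) : deGennes ξ ≤ 1 := by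
  have hsmooth := contDiff_oscillatorGroundState ξ
  have hint : Integrable fun t => ‖oscillatorGroundState ξ t‖ ^ 2 := by
    simp_rw [norm_oscillatorGroundState_sq]
    exact (integrable_exp_neg_mul_sq one_pos).comp_sub_right ξ
  have hpos : 0 < ∫ t in Ioi (0 : ℝ), ‖oscillatorGroundState ξ t‖ ^ 2 :=
    setIntegral_pos_of_isOpen isOpen_Ioi (hsmooth.continuous.norm.pow 2) hint.integrableOn
      (fun t => sq_nonneg _) (mem_Ioi.2 one_pos)
      (norm_oscillatorGroundState_sq ξ 1 ▸ (exp_pos _).ne')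
  rw [deGennes_eq_neumannBottom]
  refine neumannBottom_le_of_subsolution (by fun_prop) (fun _ _ => sq_nonneg _) hsmooth
    hint.integrableOn hpos ?_ fun t _ => ?_
  · rw [(hasDerivAt_oscillatorGroundState ξ 0).deriv, sub_zero, real_inner_smul_right,
      real_inner_self_eq_norm_sq]
    exact mul_nonneg hξ (sq_nonneg _)
  · rw [deriv_deriv_oscillatorGroundState, ← sub_smul, sub_sub_cancel, one_smul,
      real_inner_self_eq_norm_sq, one_mul]

theorem tendsto_deGennes_atTop : Tendsto deGennes atTop (𝓝 1) := by
  have hexp : Tendsto (fun ξ : ℝ => 1 - 2 * ξ * exp ((1 - ξ) / 2)) atTop (𝓝 1) := by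
    have := (tendsto_pow_mul_exp_neg_atTop_nhds_zero 1).comp
      (tendsto_id.atTop_div_const two_pos : Tendsto (fun ξ : ℝ => ξ / 2) atTop atTop)
    have := (this.const_mul (4 * exp (1 / 2))).const_sub 1
    rw [mul_zero, sub_zero] at this
    refine this.congr fun ξ => ?_
    rw [show (1 - ξ) / 2 = 1 / 2 + -(ξ / 2) by ring, exp_add]
    simp only [Function.comp_apply, pow_one]
    ring
  refine tendsto_of_tendsto_of_tendsto_of_le_of_le' hexp tendsto_const_nhds ?_ ?_
  · filter_upwards [eventually_ge_atTop 0] with ξ hξ using one_sub_le_deGennes hξ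
  · filter_upwards [eventually_ge_atTop 0] with ξ hξ using deGennes_le_one hξ

end DeGennes

end MagWedge

open MagWedge in
theorem sEss_tendsto_one_general {γ : ℝ} (hγ : 0 < Real.sin γ) :
    Filter.Tendsto
      (fun τ : ℝ => ⨅ ξ : ℝ, (deGennes (ξ * Real.cos γ + τ * Real.sin γ)
          + (ξ * Real.sin γ - τ * Real.cos γ) ^ 2))
      Filter.atTop (nhds 1) := by
  simp_rw [iInf_comp_rotation_add_sq deGennes hγ.ne']
  exact tendsto_iInf_comp_affine_add_sq ⟨0, forall_mem_range.2 deGennes_nonneg⟩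
    tendsto_deGennes_atTop (inv_pos.2 hγ) _

open MagWedge in
/-- `lim_{τ→+∞} s_ess(B;α,τ) = 1` (Persson characterization form). -/
theorem sEss_tendsto_one (γ : ℝ) (hγ : γ ∈ Set.Ioc 0 (π / 2)) :
    Filter.Tendsto
      (fun τ : ℝ => ⨅ ξ : ℝ, (deGennes (ξ * Real.cos γ + τ * Real.sin γ)
          + (ξ * Real.sin γ - τ * Real.cos γ) ^ 2))
      Filter.atTop (nhds 1) :=
  sEss_tendsto_one_general <|
    Real.sin_pos_of_pos_of_lt_pi hγ.1 (hγ.2.trans_lt (half_lt_self Real.pi_pos))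
end
end

section
/- Let α ∈ (0,π), γ ∈ [0,π/2], and B = (sin γ·cos(α/2), sin γ·sin(α/2), cos γ) (a unit magnetic field tangent to a face of the wedge W_α). Then λ(B;W_α) ≤ Θ₀. -/
open Real MeasureTheory Set Filter

noncomputable section

/-!
Away from the edge, the wedge looks like a half-space near the face `x₂ = x₁ tan (α / 2)`, to which
the field is tangent. Let `t` be the distance to this face and `σ`, `z` coordinates along it,
orthogonal and parallel to the edge. A change of gauge turns the magnetic potential into
`(ξ - t) n` with `n` a unit vector tangent to the face, so for a product `f(t) k(σ) w(z)` with real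
`k` and `w` the energy separates: the Rayleigh quotient is the de Gennes quotient of `f` at `ξ` plus
`∫ k'² / ∫ k² + ∫ w'² / ∫ w²`. With `k` supported far from the edge the opposite face plays no role,
and stretching `k` and `w` makes the last two terms arbitrarily small.
-/

namespace MagWedge

open Function (support notMem_support support_pow)

lemma measurePreserving_of_involutive {E : Type*} [NormedAddCommGroup E] [NormedSpace ℝ E]
    [FiniteDimensional ℝ E] [MeasurableSpace E] [BorelSpace E] (μ : Measure E)
    [μ.IsAddHaarMeasure] {L : E →ₗ[ℝ] E} (hL : Function.Involutive L) :
    MeasurePreserving L μ μ := by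
  have hdet : LinearMap.det L * LinearMap.det L = 1 := by
    rw [← LinearMap.det_comp, LinearMap.ext (f := L ∘ₗ L) (g := LinearMap.id) hL, LinearMap.det_id]
  have habs : |(LinearMap.det L)⁻¹| = 1 := by
    rcases mul_self_eq_one_iff.mp hdet with h | h <;> simp [h]
  refine ⟨L.continuous_of_finiteDimensional.measurable, ?_⟩
  rw [Measure.map_linearMap_addHaar_eq_smul_addHaar μ (left_ne_zero_of_mul_eq_one hdet), habs,
    ENNReal.ofReal_one, one_smul]

open scoped Matrix in
lemma sum_norm_sq_mul_add_mul {ι : Type*} [Fintype ι] (l g p : ι → ℝ) (hg : l ⬝ᵥ g = 0)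
    (hp : l ⬝ᵥ p = 0) (a b : ℂ) :
    ∑ j, ‖l j * a + (g j + p j * Complex.I) * b‖ ^ 2 =
      (l ⬝ᵥ l) * ‖a‖ ^ 2 + (g ⬝ᵥ g + p ⬝ᵥ p) * ‖b‖ ^ 2 := by
  have expand (j : ι) : ‖l j * a + (g j + p j * Complex.I) * b‖ ^ 2 =
      l j * l j * ‖a‖ ^ 2 + (g j * g j + p j * p j) * ‖b‖ ^ 2 +
        (l j * g j * (2 * (a.re * b.re + a.im * b.im)) +
          l j * p j * (2 * (a.im * b.re - a.re * b.im))) := by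
    simp only [Complex.sq_norm, Complex.normSq_apply, Complex.add_re, Complex.add_im,
      Complex.mul_re, Complex.mul_im, Complex.ofReal_re, Complex.ofReal_im, Complex.I_re,
      Complex.I_im]
    ring
  simp only [dotProduct] at hg hp ⊢
  simp only [expand, Finset.sum_add_distrib, ← Finset.sum_mul, hg, hp, zero_mul, add_zero]

lemma norm_fderiv_gauge {E : Type*} [NormedAddCommGroup E] [NormedSpace ℝ E] {φ : E → ℝ}
    {v : E → ℂ} {x : E} (hφ : DifferentiableAt ℝ φ x) (hv : DifferentiableAt ℝ v x) (y : E)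
    (a : ℝ) :
    ‖-Complex.I * fderiv ℝ (fun x ↦ Complex.exp (φ x * Complex.I) * v x) x y +
        a * (Complex.exp (φ x * Complex.I) * v x)‖ =
      ‖fderiv ℝ v x y + ((a + fderiv ℝ φ x y : ℝ) : ℂ) * Complex.I * v x‖ := by
  have hderiv : HasFDerivAt (fun x ↦ Complex.exp (φ x * Complex.I) * v x) _ x :=
    ((Complex.ofRealCLM.hasFDerivAt.comp x hφ.hasFDerivAt).mul_const Complex.I).cexp.mul
      hv.hasFDerivAt
  have hfactor : -Complex.I * fderiv ℝ (fun x ↦ Complex.exp (φ x * Complex.I) * v x) x y +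
        a * (Complex.exp (φ x * Complex.I) * v x) =
      -Complex.I * Complex.exp (φ x * Complex.I) *
        (fderiv ℝ v x y + ((a + fderiv ℝ φ x y : ℝ) : ℂ) * Complex.I * v x) := by
    rw [hderiv.fderiv]
    simp only [Function.comp_apply, add_apply, smul_apply,
      ContinuousLinearMap.comp_apply, Complex.ofRealCLM_apply, smul_eq_mul]
    push_cast
    linear_combination Complex.exp (φ x * Complex.I) * v x * a * Complex.I_sq
  rw [hfactor, norm_mul, norm_mul, Complex.norm_exp_ofReal_mul_I, norm_neg, Complex.norm_I,
    one_mul, one_mul]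

lemma support_norm_sq_subset {X E : Type*} [NormedAddCommGroup E] (f : X → E) :
    support (fun t ↦ ‖f t‖ ^ 2) ⊆ support f := fun _ ht ↦
  norm_ne_zero_iff.mp (pow_ne_zero_iff two_ne_zero |>.mp ht)

lemma support_deriv_sq_add_mul_sq_subset {E : Type*} [NormedAddCommGroup E] [NormedSpace ℝ E]
    (f : ℝ → E) (V : ℝ → ℝ) :
    support (fun t ↦ ‖deriv f t‖ ^ 2 + V t * ‖f t‖ ^ 2) ⊆ tsupport f := by
  intro t ht
  contrapose! ht
  have hderiv : deriv f t = 0 := notMem_support.mp fun h ↦ ht (support_deriv_subset h)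
  simp [hderiv, image_eq_zero_of_notMem_tsupport ht]

lemma integral_deriv_sq_div_integral_sq_comp_mul_left (f : ℝ → ℝ) {c : ℝ} (hc : c ≠ 0) :
    (∫ x, deriv (fun x ↦ f (c * x)) x ^ 2) / ∫ x, f (c * x) ^ 2 =
      c ^ 2 * ((∫ x, deriv f x ^ 2) / ∫ x, f x ^ 2) := by
  have hderiv (x : ℝ) : deriv (fun x ↦ f (c * x)) x = c * deriv f (c * x) :=
    deriv_comp_mul_left c f x
  simp only [hderiv, mul_pow, integral_const_mul, smul_eq_mul,
    Measure.integral_comp_mul_left (fun x ↦ deriv f x ^ 2),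
    Measure.integral_comp_mul_left (fun x ↦ f x ^ 2)]
  rw [mul_left_comm, mul_div_mul_left _ _ (abs_ne_zero.mpr (inv_ne_zero hc)), mul_div_assoc]

lemma exists_cutoff (a : ℝ) {ε : ℝ} (hε : 0 < ε) :
    ∃ k : ℝ → ℝ, ContDiff ℝ (⊤ : ℕ∞) k ∧ HasCompactSupport k ∧ tsupport k ⊆ Ici a ∧
      0 < ∫ x, k x ^ 2 ∧ (∫ x, deriv k x ^ 2) / (∫ x, k x ^ 2) < ε := by
  let η : ContDiffBump (2 : ℝ) := ⟨1 / 2, 1, by norm_num, by norm_num⟩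
  have hη : ContDiff ℝ (⊤ : ℕ∞) η := η.contDiff
  have hη_supp (x : ℝ) (hx : η x ≠ 0) : 1 < x := by
    have hball : x ∈ Metric.ball 2 η.rOut := η.support_eq ▸ hx
    rw [Real.ball_eq_Ioo] at hball
    have hlower : 2 - η.rOut < x := hball.1
    norm_num [η] at hlower
    exact hlower
  have hη_pos : 0 < ∫ x, η x ^ 2 :=
    (η.continuous.pow 2).integral_pos_of_hasCompactSupport_nonneg_nonzero (x := 2)
      (η.hasCompactSupport.comp_left (g := (· ^ 2)) (by simp)) (fun x ↦ sq_nonneg (η x))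
      (by simp [η.one_of_mem_closedBall (Metric.mem_closedBall_self η.rIn_pos.le)])
  set q := (∫ x, deriv η x ^ 2) / ∫ x, η x ^ 2
  have hsmall : ∀ᶠ c : ℝ in nhdsWithin 0 (Ioi 0), c ^ 2 * q < ε ∧ c * a < 1 := by
    have hquotient : ContinuousAt (fun c : ℝ ↦ c ^ 2 * q) 0 := by fun_prop
    have htranslate : ContinuousAt (fun c : ℝ ↦ c * a) 0 := by fun_prop
    exact nhdsWithin_le_nhds ((hquotient.eventually_lt_const (by simpa)).and
      (htranslate.eventually_lt_const (by simp)))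
  obtain ⟨c, ⟨hcq, hca⟩, hc⟩ := (hsmall.and self_mem_nhdsWithin).exists
  replace hc : 0 < c := hc
  refine ⟨fun x ↦ η (c * x), hη.comp (by fun_prop),
    η.hasCompactSupport.comp_homeomorph (Homeomorph.mulLeft₀ c hc.ne'),
    closure_minimal (fun x hx ↦ ?_) isClosed_Ici, ?_, ?_⟩
  · exact (lt_of_mul_lt_mul_left (hca.trans (hη_supp _ hx)) hc.le).le
  · rw [Measure.integral_comp_mul_left (fun x ↦ η x ^ 2), smul_eq_mul]
    positivity
  · rwa [integral_deriv_sq_div_integral_sq_comp_mul_left η hc.ne']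

/-- Coordinates `(σ, t, z)` adapted to the face of `W_{2θ}` on which `x₂ = x₁ tan θ`: `σ` runs
along the face, orthogonally to the edge, `t` is the signed distance to the face and `z = x₃`.
The sign of `t` makes this map a reflection of the `(x₁, x₂)`-plane, hence an involution. -/
def faceCoords (θ : ℝ) : (ℝ × ℝ × ℝ) ≃L[ℝ] (ℝ × ℝ × ℝ) :=
  (LinearEquiv.ofInvolutive
    { toFun := fun x ↦ (cos θ * x.1 + sin θ * x.2.1, sin θ * x.1 - cos θ * x.2.1, x.2.2)
      map_add' := fun x y ↦ by ext <;> simp <;> ring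
      map_smul' := fun c x ↦ by ext <;> simp <;> ring }
    fun x ↦ by
      ext
      · simp only [LinearMap.coe_mk, AddHom.coe_mk]
        linear_combination x.1 * sin_sq_add_cos_sq θ
      · simp only [LinearMap.coe_mk, AddHom.coe_mk]
        linear_combination x.2.1 * sin_sq_add_cos_sq θ
      · rfl).toContinuousLinearEquiv

lemma faceCoords_apply (θ : ℝ) (x : ℝ × ℝ × ℝ) :
    faceCoords θ x = (cos θ * x.1 + sin θ * x.2.1, sin θ * x.1 - cos θ * x.2.1, x.2.2) := rfl

lemma faceCoords_involutive (θ : ℝ) : Function.Involutive (faceCoords θ) :=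
  (faceCoords θ).apply_symm_apply

lemma measurePreserving_faceCoords (θ : ℝ) : MeasurePreserving (faceCoords θ) := by
  have : (volume : Measure (ℝ × ℝ)).IsAddHaarMeasure := Measure.prod.instIsAddHaarMeasure _ _
  have : (volume : Measure (ℝ × ℝ × ℝ)).IsAddHaarMeasure := Measure.prod.instIsAddHaarMeasure _ _
  exact measurePreserving_of_involutive volume (L := (faceCoords θ).toLinearEquiv.toLinearMap)
    (faceCoords_involutive θ)

lemma mem_wedge_iff_faceCoords {α : ℝ} (hα : 0 < cos (α / 2)) (x : ℝ × ℝ × ℝ) :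
    x ∈ wedge α ↔ 0 ≤ (faceCoords (α / 2) x).2.1 ∧
      (faceCoords (α / 2) x).2.1 * cos α ≤ (faceCoords (α / 2) x).1 * sin α := by
  have hlower : (cos (α / 2) * x.1 + sin (α / 2) * x.2.1) * sin α -
      (sin (α / 2) * x.1 - cos (α / 2) * x.2.1) * cos α =
        sin (α / 2) * x.1 + cos (α / 2) * x.2.1 := by
    obtain ⟨θ, rfl⟩ : ∃ θ, α = 2 * θ := ⟨α / 2, by ring⟩
    rw [mul_div_cancel_left₀ θ two_ne_zero, sin_two_mul, cos_two_mul']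
    linear_combination (sin θ * x.1 + cos θ * x.2.1) * sin_sq_add_cos_sq θ
  have hwedge : x ∈ wedge α ↔ |cos (α / 2) * x.2.1| ≤ sin (α / 2) * x.1 := by
    rw [wedge, mem_ofPred_eq, tan_eq_sin_div_cos, ← mul_div_assoc, le_div_iff₀ hα, abs_mul,
      abs_of_pos hα, mul_comm (cos _), mul_comm (sin _)]
  rw [faceCoords_apply, hwedge, abs_le, ← sub_nonneg (b := _ * cos α), hlower]
  constructor <;> rintro ⟨h₁, h₂⟩ <;> constructor <;> linarith

lemma setIntegral_wedge_comp_faceCoords {α : ℝ} (hα : 0 < cos (α / 2)) {F : ℝ × ℝ × ℝ → ℝ}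
    (hF : ∀ y, F y ≠ 0 → y.2.1 * cos α ≤ y.1 * sin α) :
    ∫ x in wedge α, F (faceCoords (α / 2) x) = ∫ y in univ ×ˢ Ici 0 ×ˢ univ, F y := by
  have hpreimage : wedge α = faceCoords (α / 2) ⁻¹'
      {y : ℝ × ℝ × ℝ | 0 ≤ y.2.1 ∧ y.2.1 * cos α ≤ y.1 * sin α} :=
    Set.ext (mem_wedge_iff_faceCoords hα)
  rw [hpreimage, (measurePreserving_faceCoords _).setIntegral_preimage_emb
    (faceCoords _).toHomeomorph.measurableEmbedding]
  refine (setIntegral_eq_of_subset_of_forall_sdiff_eq_zero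
    (MeasurableSet.univ.prod (measurableSet_Ici.prod MeasurableSet.univ))
    (fun y hy ↦ ⟨trivial, hy.1, trivial⟩) fun y hy ↦ ?_).symm
  by_contra hne
  exact hy.2 ⟨hy.1.2.1, hF y hne⟩

lemma setIntegral_wedge_mul_comp_faceCoords {α : ℝ} (hα : 0 < cos (α / 2)) {H G : ℝ → ℝ}
    (J : ℝ → ℝ) (hHG : ∀ σ t, H σ ≠ 0 → G t ≠ 0 → t * cos α ≤ σ * sin α) :
    ∫ x in wedge α, H (faceCoords (α / 2) x).1 *
        (G (faceCoords (α / 2) x).2.1 * J (faceCoords (α / 2) x).2.2) =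
      (∫ σ, H σ) * ((∫ t in Ioi 0, G t) * ∫ z, J z) := by
  rw [setIntegral_wedge_comp_faceCoords hα (F := fun y ↦ H y.1 * (G y.2.1 * J y.2.2)) fun y hy ↦
    hHG _ _ (left_ne_zero_of_mul hy) (left_ne_zero_of_mul (right_ne_zero_of_mul hy))]
  calc ∫ y in univ ×ˢ Ici 0 ×ˢ univ, H y.1 * (G y.2.1 * J y.2.2)
      = (∫ σ in univ, H σ) * ∫ y in Ici 0 ×ˢ univ, G y.1 * J y.2 :=
        setIntegral_prod_mul H (fun y : ℝ × ℝ ↦ G y.1 * J y.2) univ (Ici 0 ×ˢ univ)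
    _ = (∫ σ in univ, H σ) * ((∫ t in Ici 0, G t) * ∫ z in univ, J z) :=
        congrArg _ (setIntegral_prod_mul G J (Ici 0) univ)
    _ = _ := by rw [setIntegral_univ, setIntegral_univ, integral_Ici_eq_integral_Ioi]

lemma integrable_mul_comp_faceCoords (θ : ℝ) {H G J : ℝ → ℝ} (hH : Integrable H)
    (hG : Integrable G) (hJ : Integrable J) :
    Integrable fun x ↦ H (faceCoords θ x).1 *
      (G (faceCoords θ x).2.1 * J (faceCoords θ x).2.2) :=
  (measurePreserving_faceCoords θ).integrable_comp_of_integrable (hH.mul_prod (hG.mul_prod hJ))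

/-- The phase of the quasimode. Adding its gradient to the potential `(x₂ b₃, 0, x₁ b₂ - x₂ b₁)` of
the field tangent to the face gives `(ξ - t) n`, with `n` the unit vector tangent to the face and
orthogonal to the field. -/
def facePhase (θ γ ξ : ℝ) (x : ℝ × ℝ × ℝ) : ℝ :=
  ξ * (cos γ * (faceCoords θ x).1 - sin γ * (faceCoords θ x).2.2) -
    cos γ * (x.1 * x.2.1 + (faceCoords θ x).1 * (faceCoords θ x).2.1) / 2

/-- The quasimode without its phase, in the coordinates `(σ, t, z)` of `faceCoords`: the half-line
function `f` of the distance `t` to the face, cut off by `k` and `w` along the face. -/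
def faceProfile (f : ℝ → ℂ) (k w : ℝ → ℝ) (y : ℝ × ℝ × ℝ) : ℂ :=
  ((k y.1 * w y.2.2 : ℝ) : ℂ) * f y.2.1

/-- The test function on the wedge which near the chosen face imitates a generalized eigenfunction
of the half-space. -/
def quasimode (θ γ ξ : ℝ) (f : ℝ → ℂ) (k w : ℝ → ℝ) (x : ℝ × ℝ × ℝ) : ℂ :=
  Complex.exp (facePhase θ γ ξ x * Complex.I) * faceProfile f k w (faceCoords θ x)

/-- The integrand of `energy3D`. -/
def energyDensity3D (b1 b2 b3 : ℝ) (u : ℝ × ℝ × ℝ → ℂ) (x : ℝ × ℝ × ℝ) : ℝ :=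
  ‖(-Complex.I) * fderiv ℝ u x (1, 0, 0) + ((x.2.1 * b3 : ℝ) : ℂ) * u x‖ ^ 2
    + ‖fderiv ℝ u x (0, 1, 0)‖ ^ 2
    + ‖(-Complex.I) * fderiv ℝ u x (0, 0, 1) - ((x.2.1 * b1 : ℝ) : ℂ) * u x
        + ((x.1 * b2 : ℝ) : ℂ) * u x‖ ^ 2

/-- The coordinate directions of `ℝ × ℝ × ℝ`, indexed so that the three terms of the energy form a
sum. -/
def axes : Fin 3 → ℝ × ℝ × ℝ := ![(1, 0, 0), (0, 1, 0), (0, 0, 1)]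

section Quasimode

variable (θ γ ξ : ℝ) {f : ℝ → ℂ} {k w : ℝ → ℝ}

lemma contDiff_facePhase : ContDiff ℝ (⊤ : ℕ∞) (facePhase θ γ ξ) := by
  unfold facePhase
  fun_prop

lemma fderiv_facePhase_apply (x y : ℝ × ℝ × ℝ) :
    fderiv ℝ (facePhase θ γ ξ) x y =
      ξ * (cos γ * (faceCoords θ y).1 - sin γ * (faceCoords θ y).2.2) -
        cos γ * (x.1 * y.2.1 + x.2.1 * y.1 + (faceCoords θ x).1 * (faceCoords θ y).2.1 +
          (faceCoords θ x).2.1 * (faceCoords θ y).1) / 2 := by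
  have hx₁ : HasFDerivAt (fun x : ℝ × ℝ × ℝ ↦ x.1) _ x :=
    (ContinuousLinearMap.fst ℝ ℝ (ℝ × ℝ)).hasFDerivAt
  have hx₂ : HasFDerivAt (fun x : ℝ × ℝ × ℝ ↦ x.2.1) _ x :=
    (ContinuousLinearMap.snd ℝ ℝ (ℝ × ℝ)).hasFDerivAt.fst
  have hσ : HasFDerivAt (fun x ↦ (faceCoords θ x).1) _ x := (faceCoords θ).hasFDerivAt.fst
  have ht : HasFDerivAt (fun x ↦ (faceCoords θ x).2.1) _ x := (faceCoords θ).hasFDerivAt.snd.fst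
  have hz : HasFDerivAt (fun x ↦ (faceCoords θ x).2.2) _ x := (faceCoords θ).hasFDerivAt.snd.snd
  have hphase : HasFDerivAt (facePhase θ γ ξ) _ x :=
    (((hσ.const_mul (cos γ)).sub (hz.const_mul (sin γ))).const_mul ξ).sub
      ((((hx₁.mul hx₂).add (hσ.mul ht)).const_mul (cos γ)).mul_const 2⁻¹)
  rw [hphase.fderiv]
  simp only [sub_apply, add_apply, smul_apply, ContinuousLinearMap.comp_apply, smul_eq_mul,
    ContinuousLinearEquiv.coe_coe, ContinuousLinearMap.coe_fst', ContinuousLinearMap.coe_snd']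
  ring

lemma potential_add_fderiv_facePhase (x d : ℝ × ℝ × ℝ) :
    x.2.1 * cos γ * d.1 + sin γ * (faceCoords θ x).2.1 * d.2.2 +
        fderiv ℝ (facePhase θ γ ξ) x d =
      (ξ - (faceCoords θ x).2.1) *
        (cos γ * (faceCoords θ d).1 - sin γ * (faceCoords θ d).2.2) := by
  simp only [fderiv_facePhase_apply, faceCoords_apply]
  linear_combination cos γ / 2 * (x.1 * d.2.1 - x.2.1 * d.1) * sin_sq_add_cos_sq θ

lemma contDiff_faceProfile (hf : ContDiff ℝ (⊤ : ℕ∞) f) (hk : ContDiff ℝ (⊤ : ℕ∞) k)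
    (hw : ContDiff ℝ (⊤ : ℕ∞) w) : ContDiff ℝ (⊤ : ℕ∞) (faceProfile f k w) :=
  (Complex.ofRealCLM.contDiff.comp
    ((hk.comp contDiff_fst).mul (hw.comp (contDiff_snd.comp contDiff_snd)))).mul
      (hf.comp (contDiff_fst.comp contDiff_snd))

lemma fderiv_faceProfile_apply (hf : Differentiable ℝ f) (hk : Differentiable ℝ k)
    (hw : Differentiable ℝ w) (y d : ℝ × ℝ × ℝ) :
    fderiv ℝ (faceProfile f k w) y d =
      ((d.2.1 * (k y.1 * w y.2.2) : ℝ) : ℂ) * deriv f y.2.1 +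
        ((d.1 * (deriv k y.1 * w y.2.2) + d.2.2 * (k y.1 * deriv w y.2.2) : ℝ) : ℂ) *
          f y.2.1 := by
  have hfst := (ContinuousLinearMap.fst ℝ ℝ (ℝ × ℝ)).hasFDerivAt (x := y)
  have hsnd := (ContinuousLinearMap.snd ℝ ℝ (ℝ × ℝ)).hasFDerivAt (x := y)
  have hk' : HasFDerivAt (fun y : ℝ × ℝ × ℝ ↦ k y.1) _ y :=
    (hk y.1).hasDerivAt.comp_hasFDerivAt y hfst
  have hw' : HasFDerivAt (fun y : ℝ × ℝ × ℝ ↦ w y.2.2) _ y :=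
    (hw y.2.2).hasDerivAt.comp_hasFDerivAt y hsnd.snd
  have hf' : HasFDerivAt (fun y : ℝ × ℝ × ℝ ↦ f y.2.1) _ y :=
    (hf y.2.1).hasFDerivAt.comp y hsnd.fst
  have hprofile : HasFDerivAt (faceProfile f k w) _ y :=
    (Complex.ofRealCLM.hasFDerivAt.comp y (hk'.mul hw')).mul hf'
  rw [hprofile.fderiv]
  simp only [add_apply, smul_apply, ContinuousLinearMap.comp_apply, Function.comp_apply,
    Pi.mul_apply, Complex.ofRealCLM_apply, ContinuousLinearMap.coe_fst',
    ContinuousLinearMap.coe_snd', fderiv_eq_smul_deriv, Complex.real_smul, smul_eq_mul]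
  push_cast
  ring

lemma contDiff_quasimode (hf : ContDiff ℝ (⊤ : ℕ∞) f) (hk : ContDiff ℝ (⊤ : ℕ∞) k)
    (hw : ContDiff ℝ (⊤ : ℕ∞) w) : ContDiff ℝ (⊤ : ℕ∞) (quasimode θ γ ξ f k w) :=
  ((Complex.ofRealCLM.contDiff.comp (contDiff_facePhase θ γ ξ)).mul contDiff_const).cexp.mul
    ((contDiff_faceProfile hf hk hw).comp (faceCoords θ).contDiff)

lemma hasCompactSupport_quasimode (hf : HasCompactSupport f) (hk : HasCompactSupport k)
    (hw : HasCompactSupport w) : HasCompactSupport (quasimode θ γ ξ f k w) := by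
  have hprofile : HasCompactSupport (faceProfile f k w) := by
    refine .intro (hk.isCompact.prod (hf.isCompact.prod hw.isCompact)) fun y hy ↦ ?_
    contrapose! hy
    have hkw := Complex.ofReal_ne_zero.mp (left_ne_zero_of_mul hy)
    exact ⟨subset_tsupport _ (left_ne_zero_of_mul hkw),
      subset_tsupport _ (right_ne_zero_of_mul hy), subset_tsupport _ (right_ne_zero_of_mul hkw)⟩
  exact (hprofile.comp_homeomorph (faceCoords θ).toHomeomorph).mul_left

lemma norm_sq_quasimode (x : ℝ × ℝ × ℝ) :
    ‖quasimode θ γ ξ f k w x‖ ^ 2 = k (faceCoords θ x).1 ^ 2 *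
      (‖f (faceCoords θ x).2.1‖ ^ 2 * w (faceCoords θ x).2.2 ^ 2) := by
  rw [quasimode, faceProfile, norm_mul, Complex.norm_exp_ofReal_mul_I, one_mul, norm_mul,
    Complex.norm_real, norm_mul, mul_pow, mul_pow, norm_eq_abs, norm_eq_abs, sq_abs, sq_abs]
  ring

lemma norm_momentum_quasimode (hf : ContDiff ℝ (⊤ : ℕ∞) f) (hk : ContDiff ℝ (⊤ : ℕ∞) k)
    (hw : ContDiff ℝ (⊤ : ℕ∞) w) {x y d e : ℝ × ℝ × ℝ} (hy : y = faceCoords θ x)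
    (he : e = faceCoords θ d) :
    ‖-Complex.I * fderiv ℝ (quasimode θ γ ξ f k w) x d +
        ((x.2.1 * cos γ * d.1 + sin γ * y.2.1 * d.2.2 : ℝ) : ℂ) * quasimode θ γ ξ f k w x‖ =
      ‖(e.2.1 : ℂ) * (((k y.1 * w y.2.2 : ℝ) : ℂ) * deriv f y.2.1) +
        (((e.1 * (deriv k y.1 * w y.2.2) + e.2.2 * (k y.1 * deriv w y.2.2) : ℝ) : ℂ) +
          (((ξ - y.2.1) * (cos γ * e.1 - sin γ * e.2.2) * (k y.1 * w y.2.2) : ℝ) : ℂ) *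
            Complex.I) * f y.2.1‖ := by
  have hv : ContDiff ℝ (⊤ : ℕ∞) (faceProfile f k w ∘ faceCoords θ) :=
    (contDiff_faceProfile hf hk hw).comp (faceCoords θ).contDiff
  have hderiv : fderiv ℝ (faceProfile f k w ∘ faceCoords θ) x d =
      fderiv ℝ (faceProfile f k w) y e := by
    rw [ContinuousLinearEquiv.comp_right_fderiv, hy, he]
    rfl
  subst hy he
  refine (norm_fderiv_gauge ((contDiff_facePhase θ γ ξ).differentiable (by simp) x)
    (hv.differentiable (by simp) x) d _).trans ?_
  rw [potential_add_fderiv_facePhase, hderiv, fderiv_faceProfile_apply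
    (hf.differentiable (by simp)) (hk.differentiable (by simp)) (hw.differentiable (by simp)),
    Function.comp_apply, faceProfile]
  congr 1
  push_cast
  ring

lemma energyDensity3D_eq_sum (u : ℝ × ℝ × ℝ → ℂ) (x : ℝ × ℝ × ℝ) :
    energyDensity3D (sin γ * cos θ) (sin γ * sin θ) (cos γ) u x =
      ∑ j, ‖-Complex.I * fderiv ℝ u x (axes j) + ((x.2.1 * cos γ * (axes j).1 +
        sin γ * (faceCoords θ x).2.1 * (axes j).2.2 : ℝ) : ℂ) * u x‖ ^ 2 := by
  have hsecond : ‖fderiv ℝ u x (0, 1, 0)‖ = ‖-Complex.I * fderiv ℝ u x (0, 1, 0)‖ := by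
    rw [norm_mul, norm_neg, Complex.norm_I, one_mul]
  rw [energyDensity3D, hsecond, Fin.sum_univ_three]
  refine congrArg₂ (· + ·) (congrArg₂ (· + ·) ?_ ?_) ?_
  all_goals
    congr 2
    simp only [axes, faceCoords_apply, Matrix.cons_val]
    push_cast
    ring

lemma energyDensity3D_quasimode (hf : ContDiff ℝ (⊤ : ℕ∞) f) (hk : ContDiff ℝ (⊤ : ℕ∞) k)
    (hw : ContDiff ℝ (⊤ : ℕ∞) w) {x y : ℝ × ℝ × ℝ} (hy : y = faceCoords θ x) :
    energyDensity3D (sin γ * cos θ) (sin γ * sin θ) (cos γ) (quasimode θ γ ξ f k w) x =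
      k y.1 ^ 2 * ((‖deriv f y.2.1‖ ^ 2 + (y.2.1 - ξ) ^ 2 * ‖f y.2.1‖ ^ 2) * w y.2.2 ^ 2) +
        deriv k y.1 ^ 2 * (‖f y.2.1‖ ^ 2 * w y.2.2 ^ 2) +
        k y.1 ^ 2 * (‖f y.2.1‖ ^ 2 * deriv w y.2.2 ^ 2) := by
  have hdir (j : Fin 3) : faceCoords θ (axes j) =
      (![cos θ, sin θ, 0] j, ![sin θ, -cos θ, 0] j, ![0, 0, 1] j) := by
    fin_cases j <;> simp [axes, faceCoords_apply]
  rw [energyDensity3D_eq_sum, ← hy]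
  simp only [norm_momentum_quasimode θ γ ξ hf hk hw hy (hdir _).symm]
  rw [sum_norm_sq_mul_add_mul]
  · rw [norm_mul, mul_pow, Complex.norm_real, norm_eq_abs, sq_abs]
    simp only [dotProduct, Fin.sum_univ_three, Matrix.cons_val]
    linear_combination ((k y.1 * w y.2.2 * ‖deriv f y.2.1‖) ^ 2 +
      (deriv k y.1 * w y.2.2 * ‖f y.2.1‖) ^ 2 +
      ((ξ - y.2.1) * cos γ * k y.1 * w y.2.2 * ‖f y.2.1‖) ^ 2) * sin_sq_add_cos_sq θ +
      ((ξ - y.2.1) * k y.1 * w y.2.2 * ‖f y.2.1‖) ^ 2 * sin_sq_add_cos_sq γ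
  all_goals
    simp only [dotProduct, Fin.sum_univ_three, Matrix.cons_val]
    ring

end Quasimode

lemma lambdaWedge_le_rayleigh (α b1 b2 b3 : ℝ) {u : ℝ × ℝ × ℝ → ℂ}
    (hu : ContDiff ℝ (⊤ : ℕ∞) u) (hsupp : HasCompactSupport u) (hpos : 0 < norm3D (wedge α) u) :
    lambdaWedge α b1 b2 b3 ≤ energy3D (wedge α) b1 b2 b3 u / norm3D (wedge α) u := by
  refine csInf_le ⟨0, ?_⟩ ⟨u, hu, hsupp, hpos, rfl⟩
  rintro r ⟨v, -, -, hv, rfl⟩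
  have henergy : 0 ≤ energy3D (wedge α) b1 b2 b3 v := integral_nonneg fun x ↦ by positivity
  positivity

section Rayleigh

variable {α : ℝ} (γ ξ : ℝ) {f : ℝ → ℂ} {k w : ℝ → ℝ}

lemma norm3D_quasimode (hα : 0 < cos (α / 2))
    (hsep : ∀ σ ∈ tsupport k, ∀ t ∈ tsupport f, t * cos α ≤ σ * sin α) :
    norm3D (wedge α) (quasimode (α / 2) γ ξ f k w) =
      (∫ σ, k σ ^ 2) * ((∫ t in Ioi 0, ‖f t‖ ^ 2) * ∫ z, w z ^ 2) := by
  simp only [norm3D, norm_sq_quasimode]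
  refine setIntegral_wedge_mul_comp_faceCoords hα (H := fun σ ↦ k σ ^ 2)
    (G := fun t ↦ ‖f t‖ ^ 2) (fun z ↦ w z ^ 2) fun σ t hσ ht ↦ hsep _ ?_ _ ?_
  · exact subset_tsupport k (pow_ne_zero_iff two_ne_zero |>.mp hσ)
  · exact subset_tsupport f (support_norm_sq_subset f ht)

lemma integrableOn_and_setIntegral_wedge_mul (hα : 0 < cos (α / 2))
    (hsep : ∀ σ ∈ tsupport k, ∀ t ∈ tsupport f, t * cos α ≤ σ * sin α)
    (hf_supp : HasCompactSupport f)
    (hk_supp : HasCompactSupport k) (hw_supp : HasCompactSupport w) {H G J : ℝ → ℝ}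
    (hH : Continuous H) (hHk : support H ⊆ tsupport k) (hG : Continuous G)
    (hGf : support G ⊆ tsupport f) (hJ : Continuous J) (hJw : support J ⊆ tsupport w) :
    IntegrableOn (fun x ↦ H (faceCoords (α / 2) x).1 *
        (G (faceCoords (α / 2) x).2.1 * J (faceCoords (α / 2) x).2.2)) (wedge α) ∧
      ∫ x in wedge α, H (faceCoords (α / 2) x).1 *
          (G (faceCoords (α / 2) x).2.1 * J (faceCoords (α / 2) x).2.2) =
        (∫ σ, H σ) * ((∫ t in Ioi 0, G t) * ∫ z, J z) :=
  ⟨(integrable_mul_comp_faceCoords (α / 2)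
      (hH.integrable_of_hasCompactSupport (hk_supp.mono' hHk))
      (hG.integrable_of_hasCompactSupport (hf_supp.mono' hGf))
      (hJ.integrable_of_hasCompactSupport (hw_supp.mono' hJw))).integrableOn,
    setIntegral_wedge_mul_comp_faceCoords hα J fun σ t hσ ht ↦ hsep σ (hHk hσ) t (hGf ht)⟩

lemma energy3D_quasimode (hα : 0 < cos (α / 2))
    (hsep : ∀ σ ∈ tsupport k, ∀ t ∈ tsupport f, t * cos α ≤ σ * sin α)
    (hf : ContDiff ℝ (⊤ : ℕ∞) f) (hk : ContDiff ℝ (⊤ : ℕ∞) k)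
    (hw : ContDiff ℝ (⊤ : ℕ∞) w) (hf_supp : HasCompactSupport f) (hk_supp : HasCompactSupport k)
    (hw_supp : HasCompactSupport w) :
    energy3D (wedge α) (sin γ * cos (α / 2)) (sin γ * sin (α / 2)) (cos γ)
        (quasimode (α / 2) γ ξ f k w) =
      (∫ σ, k σ ^ 2) *
          ((∫ t in Ioi 0, ‖deriv f t‖ ^ 2 + (t - ξ) ^ 2 * ‖f t‖ ^ 2) * ∫ z, w z ^ 2) +
        (∫ σ, deriv k σ ^ 2) * ((∫ t in Ioi 0, ‖f t‖ ^ 2) * ∫ z, w z ^ 2) +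
        (∫ σ, k σ ^ 2) * ((∫ t in Ioi 0, ‖f t‖ ^ 2) * ∫ z, deriv w z ^ 2) := by
  have hsq {v : ℝ → ℝ} : support (fun s ↦ v s ^ 2) ⊆ support v :=
    (support_pow v two_ne_zero).subset
  have hf_cont := hf.continuous
  have hf' : Continuous (deriv f) := hf.continuous_deriv (by simp)
  have hk_sq := hsq.trans (subset_tsupport k)
  have hw_sq := hsq.trans (subset_tsupport w)
  have hf_sq := (support_norm_sq_subset f).trans (subset_tsupport f)
  have hbulk := integrableOn_and_setIntegral_wedge_mul hα hsep hf_supp hk_supp hw_supp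
    (hk.continuous.fun_pow 2) hk_sq
    (by fun_prop : Continuous fun t ↦ ‖deriv f t‖ ^ 2 + (t - ξ) ^ 2 * ‖f t‖ ^ 2)
    (support_deriv_sq_add_mul_sq_subset f _) (hw.continuous.fun_pow 2) hw_sq
  have hface := integrableOn_and_setIntegral_wedge_mul hα hsep hf_supp hk_supp hw_supp
    ((hk.continuous_deriv (by simp)).fun_pow 2) (hsq.trans support_deriv_subset)
    (hf_cont.norm.fun_pow 2) hf_sq (hw.continuous.fun_pow 2) hw_sq
  have hedge := integrableOn_and_setIntegral_wedge_mul hα hsep hf_supp hk_supp hw_supp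
    (hk.continuous.fun_pow 2) hk_sq (hf_cont.norm.fun_pow 2) hf_sq
    ((hw.continuous_deriv (by simp)).fun_pow 2) (hsq.trans support_deriv_subset)
  change ∫ x in wedge α, energyDensity3D _ _ _ (quasimode (α / 2) γ ξ f k w) x = _
  simp only [energyDensity3D_quasimode (α / 2) γ ξ hf hk hw rfl]
  rw [integral_add (hbulk.1.fun_add hface.1) hedge.1, integral_add hbulk.1 hface.1, hbulk.2,
    hface.2, hedge.2]

lemma lambdaWedge_le_add (hα : 0 < cos (α / 2))
    (hsep : ∀ σ ∈ tsupport k, ∀ t ∈ tsupport f, t * cos α ≤ σ * sin α)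
    (hf : ContDiff ℝ (⊤ : ℕ∞) f) (hk : ContDiff ℝ (⊤ : ℕ∞) k)
    (hw : ContDiff ℝ (⊤ : ℕ∞) w) (hf_supp : HasCompactSupport f) (hk_supp : HasCompactSupport k)
    (hw_supp : HasCompactSupport w) (hf_pos : 0 < ∫ t in Ioi 0, ‖f t‖ ^ 2)
    (hk_pos : 0 < ∫ σ, k σ ^ 2) (hw_pos : 0 < ∫ z, w z ^ 2) :
    lambdaWedge α (sin γ * cos (α / 2)) (sin γ * sin (α / 2)) (cos γ) ≤
      (∫ t in Ioi 0, ‖deriv f t‖ ^ 2 + (t - ξ) ^ 2 * ‖f t‖ ^ 2) / (∫ t in Ioi 0, ‖f t‖ ^ 2) +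
        (∫ σ, deriv k σ ^ 2) / (∫ σ, k σ ^ 2) + (∫ z, deriv w z ^ 2) / (∫ z, w z ^ 2) := by
  have hnorm := norm3D_quasimode γ ξ (w := w) hα hsep
  refine (lambdaWedge_le_rayleigh _ _ _ _ (contDiff_quasimode (α / 2) γ ξ hf hk hw)
    (hasCompactSupport_quasimode _ _ _ hf_supp hk_supp hw_supp) ?_).trans_eq ?_
  · rw [hnorm]
    positivity
  · rw [hnorm, energy3D_quasimode γ ξ hα hsep hf hk hw hf_supp hk_supp hw_supp]
    field_simp

end Rayleigh

lemma lambdaWedge_le_halfLine_rayleigh {α : ℝ} (hα : α ∈ Ioo 0 π) (γ ξ : ℝ) {f : ℝ → ℂ}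
    (hf : ContDiff ℝ (⊤ : ℕ∞) f) (hf_supp : HasCompactSupport f)
    (hf_pos : 0 < ∫ t in Ioi 0, ‖f t‖ ^ 2) :
    lambdaWedge α (sin γ * cos (α / 2)) (sin γ * sin (α / 2)) (cos γ) ≤
      (∫ t in Ioi 0, ‖deriv f t‖ ^ 2 + (t - ξ) ^ 2 * ‖f t‖ ^ 2) / ∫ t in Ioi 0, ‖f t‖ ^ 2 := by
  have hsin : 0 < sin α := sin_pos_of_mem_Ioo hα
  have hcos : 0 < cos (α / 2) := cos_pos_of_mem_Ioo ⟨by linarith [hα.1, pi_pos], by linarith [hα.2]⟩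
  obtain ⟨T, hT⟩ := hf_supp.isCompact.isBounded.exists_norm_le
  refine le_of_forall_pos_le_add fun ε hε ↦ ?_
  obtain ⟨k, hk, hk_supp, hk_far, hk_pos, hk_small⟩ := exists_cutoff (T / sin α) (half_pos hε)
  have hsep : ∀ σ ∈ tsupport k, ∀ t ∈ tsupport f, t * cos α ≤ σ * sin α := fun σ hσ t ht ↦
    calc t * cos α ≤ |t * cos α| := le_abs_self _
      _ ≤ |t| := by
        rw [abs_mul]
        exact mul_le_of_le_one_right (abs_nonneg t) (abs_cos_le_one α)
      _ ≤ T := hT t ht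
      _ ≤ σ * sin α := (div_le_iff₀ hsin).mp (hk_far hσ)
  linarith [lambdaWedge_le_add γ ξ hcos hsep hf hk hk hf_supp hk_supp hk_supp hf_pos hk_pos hk_pos]

lemma exists_halfLine_testFunction : ∃ f : ℝ → ℂ, ContDiff ℝ (⊤ : ℕ∞) f ∧ HasCompactSupport f ∧
    0 < ∫ t in Ioi (0 : ℝ), ‖f t‖ ^ 2 := by
  obtain ⟨k, hk, hk_supp, hk_one, hk_pos, -⟩ := exists_cutoff 1 one_pos
  refine ⟨fun t ↦ k t, Complex.ofRealCLM.contDiff.comp hk,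
    hk_supp.comp_left Complex.ofReal_zero, ?_⟩
  simp only [Complex.norm_real, norm_eq_abs, sq_abs]
  rwa [setIntegral_eq_integral_of_forall_compl_eq_zero fun t ht ↦ ?_]
  have hkt : k t = 0 := image_eq_zero_of_notMem_tsupport fun h ↦
    ht (one_pos.trans_le (hk_one h) : 0 < t)
  rw [hkt, zero_pow two_ne_zero]

lemma lambdaWedge_le_deGennes {α : ℝ} (hα : α ∈ Ioo 0 π) (γ ξ : ℝ) :
    lambdaWedge α (sin γ * cos (α / 2)) (sin γ * sin (α / 2)) (cos γ) ≤ deGennes ξ := by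
  obtain ⟨f₀, hf₀, hf₀_supp, hf₀_pos⟩ := exists_halfLine_testFunction
  refine le_csInf ⟨_, f₀, hf₀, hf₀_supp, hf₀_pos, rfl⟩ ?_
  rintro r ⟨f, hf, hf_supp, hf_pos, rfl⟩
  exact lambdaWedge_le_halfLine_rayleigh hα γ ξ hf hf_supp hf_pos

end MagWedge

open MagWedge in
theorem lambdaWedge_le_Theta0_general (α γ : ℝ) (hα : α ∈ Set.Ioo 0 π) :
    lambdaWedge α (Real.sin γ * Real.cos (α / 2)) (Real.sin γ * Real.sin (α / 2)) (Real.cos γ)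
      ≤ Theta0 :=
  le_ciInf fun ξ ↦ lambdaWedge_le_deGennes hα γ ξ

open MagWedge in
/-- for a field tangent to a face, `λ(B;W_α) ≤ Θ₀`. -/
theorem lambdaWedge_le_Theta0 (α γ : ℝ) (hα : α ∈ Set.Ioo 0 π) (hγ : γ ∈ Set.Icc 0 (π / 2)) :
    lambdaWedge α (Real.sin γ * Real.cos (α / 2)) (Real.sin γ * Real.sin (α / 2)) (Real.cos γ)
      ≤ Theta0 :=
  lambdaWedge_le_Theta0_general α γ hα
end
end
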